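/- (Triviality, nondivergent form) Let p ∈ (1,∞), l ∈ (0,p), n ∈ [1,∞) real, R ∈ (0,∞]. Let φ : ℝ → ℝ be continuous and odd with τφ(τ) > 0 for a.e. τ. Let a be locally absolutely continuous on [0,R) with a > 0 a.e., let δ_a(τ) := (n−1)a(τ)/τ − (1−1/p)a'(τ) satisfy δ_a > 0 a.e. with δ_a and δ_a^{−1/(p−1)} locally integrable on [0,R). Let h : (0,R) × ℝ² → ℝ be a Carathéodory function such that for some θ ∈ (0,1] and a non-negative measurable q locally integrable on [0,R): h(τ,λ₀,λ₁)λ₁ ≤ θ q(τ)|λ₀|^l |λ₁|^{p−l} + (1−θ) δ_a(τ)|λ₁|^p for all λ₀, λ₁ ∈ ℝ and a.e. τ. Assume K(0,r,q,δ_a) < ∞ for every r ∈ (0,R). Let u be locally absolutely continuous on (0,R) with Φ_p(u') locally absolutely continuous on [0,R), u(0) = 0, and suppose u solves the nondivergent ODE: a(τ)(Φ_p(u'(τ)))' + (n−1)(a(τ)/τ)Φ_p(u'(τ)) − h(τ,u(τ),u'(τ)) + φ(u(τ)) = 0 for a.e. τ ∈ (0,R). If a(0) = 0 or u'(0) = 0,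 then u ≡ 0 on [0,R). -/

import Mathlib

open MeasureTheory Set Filter
open scoped ENNReal

/-- `Φ_p(λ) = |λ|^{p-2} λ` for `λ ≠ 0`, and `Φ_p(0) = 0`. -/
noncomputable def PhiP (p x : ℝ) : ℝ := if x = 0 then 0 else |x| ^ (p - 2) * x

/-- `u` is absolutely continuous on `[s,t]` with a.e. derivative `u'`:
`u'` is integrable on `[s,t]` and the fundamental theorem of calculus holds. -/
def ACOn (u u' : ℝ → ℝ) (s t : ℝ) : Prop :=
  MeasureTheory.IntegrableOn u' (Set.Icc s t) ∧
    ∀ x ∈ Set.Icc s t, u x = u s + ∫ σ in s..x, u' σ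

/-- The Beesack–Das constant
`K(s,·,q,v) = ((p-l)/p)^{(p-l)/p} [∫_S q(t)^{p/l} v(t)^{-(p-l)/l}
  (∫_s^t v(σ)^{-1/(p-1)} dσ)^{p-1} dt]^{l/p}`, over a set `S`. -/
noncomputable def BDK (p l : ℝ) (q v : ℝ → ℝ) (s : ℝ) (S : Set ℝ) : ℝ≥0∞ :=
  ENNReal.ofReal (((p - l) / p) ^ ((p - l) / p)) *
    (∫⁻ t in S,
      ENNReal.ofReal (q t) ^ (p / l) * ENNReal.ofReal (v t) ^ (-((p - l) / l)) *
        (∫⁻ σ in Set.Ioc s t, ENNReal.ofReal (v σ) ^ (-(1 / (p - 1)))) ^ (p - 1)) ^ (l / p)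

/-- `δ_a(τ) = (n-1) a(τ)/τ - (1 - 1/p) a'(τ)`. -/
noncomputable def deltaA (n p : ℝ) (a a' : ℝ → ℝ) : ℝ → ℝ :=
  fun τ => (n - 1) * a τ / τ - (1 - 1 / p) * a' τ

/-- `d_a(τ) = (n-1) a(τ)/τ + (1/p) a'(τ)`. -/
noncomputable def dA (n p : ℝ) (a a' : ℝ → ℝ) : ℝ → ℝ :=
  fun τ => (n - 1) * a τ / τ + (1 / p) * a' τ

/-!
Along a solution, the energy `(1 - 1/p) a |u'|^p + ∫₀ᵘ φ` has derivative `h u' - δ_a |u'|^p`. The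
Beesack–Das inequality `∫ q |u|^l |u'|^(p-l) ≤ K ∫ v |u'|^p`, valid for `u` vanishing at the left
endpoint, absorbs the contribution of `h` into the dissipation `∫ δ_a |u'|^p` as soon as `K < 1`.
If moreover the initial energy is zero, then the energy, a sum of two nonnegative terms, vanishes at
the right endpoint and `u' = 0` a.e. in between. Since `K` is an integral raised to a positive
power, it tends to `0` when the interval shrinks to its left endpoint, so the vanishing of `u` and
of the kinetic term propagates from each point to points further right, and continuous induction
covers the whole interval.
-/

open scoped NNReal Topology

/-! ### Absolutely continuous functions -/

theorem absolutelyContinuousOnInterval_congr {X : Type*} [PseudoMetricSpace X] {f g : ℝ → X}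
    {a b : ℝ} (hf : AbsolutelyContinuousOnInterval f a b) (hfg : EqOn f g (uIcc a b)) :
    AbsolutelyContinuousOnInterval g a b := by
  refine Tendsto.congr' ?_ hf
  filter_upwards [mem_inf_of_right (mem_principal_self _)] with E hE
  exact Finset.sum_congr rfl fun i hi => by rw [hfg (hE.1 i hi).1, hfg (hE.1 i hi).2]

theorem absolutelyContinuousOnInterval_lipschitzOnWith_comp {X Y : Type*} [PseudoMetricSpace X]
    [PseudoMetricSpace Y] {f : ℝ → X} {g : X → Y} {K : ℝ≥0} {S : Set X} {a b : ℝ}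
    (hg : LipschitzOnWith K g S) (hf : AbsolutelyContinuousOnInterval f a b)
    (hfS : MapsTo f (uIcc a b) S) :
    AbsolutelyContinuousOnInterval (g ∘ f) a b := by
  have hbound := Tendsto.const_mul (K : ℝ) hf
  rw [mul_zero] at hbound
  refine squeeze_zero' (.of_forall fun E => Finset.sum_nonneg fun _ _ => dist_nonneg) ?_ hbound
  filter_upwards [mem_inf_of_right (mem_principal_self _)] with E hE
  rw [Finset.mul_sum]
  exact Finset.sum_le_sum fun i hi =>
    hg.dist_le_mul _ (hfS (hE.1 i hi).1) _ (hfS (hE.1 i hi).2)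

theorem acOn_iff {u u' : ℝ → ℝ} {s r : ℝ} (hsr : s ≤ r) :
    ACOn u u' s r ↔ AbsolutelyContinuousOnInterval u s r ∧
      ∀ᵐ t ∂volume.restrict (Ioc s r), HasDerivAt u (u' t) t := by
  constructor
  · rintro ⟨hint, hftc⟩
    have hint' : IntervalIntegrable u' volume s r :=
      (intervalIntegrable_iff_integrableOn_Icc_of_le hsr).2 hint
    refine ⟨absolutelyContinuousOnInterval_congr
      (((contDiff_const (c := u s)).contDiffOn.absolutelyContinuousOnInterval).add
        (hint'.absolutelyContinuousOnInterval_intervalIntegral left_mem_uIcc))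
      fun t ht => (hftc t (uIcc_of_le hsr ▸ ht)).symm, ?_⟩
    rw [← restrict_Ioo_eq_restrict_Ioc, ae_restrict_iff' measurableSet_Ioo]
    filter_upwards [hint'.ae_hasDerivAt_integral] with t hderiv ht
    have hprim := hderiv (uIcc_of_le hsr ▸ Ioo_subset_Icc_self ht) s left_mem_uIcc
    refine (hprim.const_add (u s)).congr_of_eventuallyEq ?_
    filter_upwards [Icc_mem_nhds ht.1 ht.2] with x hx using hftc x hx
  · rintro ⟨hac, hderiv⟩
    have hae : deriv u =ᵐ[volume.restrict (Ioc s r)] u' := hderiv.mono fun t ht => ht.deriv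
    refine ⟨(integrableOn_Icc_iff_integrableOn_Ioc (by finiteness)).2 <|
      ((intervalIntegrable_iff_integrableOn_Ioc_of_le hsr).1
        hac.intervalIntegrable_deriv).congr_fun_ae hae, fun t ht => ?_⟩
    have hftc : ∫ σ in s..t, deriv u σ = u t - u s :=
      (hac.mono (uIcc_subset_uIcc_left (uIcc_of_le hsr ▸ ht))).integral_deriv_eq_sub
    rw [intervalIntegral.integral_congr_ae_restrict (g := u')] at hftc
    · linarith
    · rw [uIoc_of_le ht.1]
      exact ae_restrict_of_ae_restrict_of_subset (Ioc_subset_Ioc_right ht.2) hae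

namespace ACOn

variable {u u' w w' : ℝ → ℝ} {s r : ℝ}

theorem continuousOn (hu : ACOn u u' s r) : ContinuousOn u (Icc s r) :=
  ((intervalIntegral.continuousOn_primitive hu.1).const_add (u s)).congr fun t ht => by
    rw [hu.2 t ht, intervalIntegral.integral_of_le ht.1]

theorem mono {x y : ℝ} (hu : ACOn u u' s r) (hsx : s ≤ x) (hyr : y ≤ r) : ACOn u u' x y := by
  refine ⟨hu.1.mono_set (Icc_subset_Icc hsx hyr), fun t ht => ?_⟩
  have hx : x ∈ Icc s r := ⟨hsx, (ht.1.trans ht.2).trans hyr⟩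
  have ht' : t ∈ Icc s r := ⟨hsx.trans ht.1, ht.2.trans hyr⟩
  have hint {z : ℝ} (hz : z ∈ Icc s r) : IntervalIntegrable u' volume s z :=
    (intervalIntegrable_iff_integrableOn_Icc_of_le hz.1).2
      (hu.1.mono_set (Icc_subset_Icc_right hz.2))
  rw [hu.2 t ht', hu.2 x hx, add_assoc, ← intervalIntegral.integral_interval_sub_left
    (hint ht') (hint hx), add_sub_cancel]

theorem add (hsr : s ≤ r) (hu : ACOn u u' s r) (hw : ACOn w w' s r) :
    ACOn (fun t => u t + w t) (fun t => u' t + w' t) s r := by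
  rw [acOn_iff hsr] at *
  refine ⟨hu.1.add hw.1, ?_⟩
  filter_upwards [hu.2, hw.2] with t hut hwt using hut.add hwt

theorem mul (hsr : s ≤ r) (hu : ACOn u u' s r) (hw : ACOn w w' s r) :
    ACOn (fun t => u t * w t) (fun t => u' t * w t + u t * w' t) s r := by
  rw [acOn_iff hsr] at *
  refine ⟨hu.1.mul hw.1, ?_⟩
  filter_upwards [hu.2, hw.2] with t hut hwt using hut.mul hwt

theorem const_mul (hsr : s ≤ r) (c : ℝ) (hu : ACOn u u' s r) :
    ACOn (fun t => c * u t) (fun t => c * u' t) s r := by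
  rw [acOn_iff hsr] at *
  exact ⟨hu.1.const_mul c, hu.2.mono fun t hut => hut.const_mul c⟩

theorem comp {G G' : ℝ → ℝ} (hsr : s ≤ r) (hG : ∀ x, HasDerivAt G (G' x) x) (hG' : Continuous G')
    (hu : ACOn u u' s r) : ACOn (fun t => G (u t)) (fun t => G' (u t) * u' t) s r := by
  rw [acOn_iff hsr] at *
  obtain ⟨C, hC⟩ := hu.1.exists_bound
  have hGC1 : ContDiff ℝ 1 G := contDiff_one_iff_deriv.2
    ⟨fun x => (hG x).differentiableAt, by rwa [funext fun x => (hG x).deriv]⟩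
  obtain ⟨K, hK⟩ := hGC1.contDiffOn.exists_lipschitzOnWith one_ne_zero
    (convex_closedBall 0 C) (isCompact_closedBall 0 C)
  refine ⟨absolutelyContinuousOnInterval_lipschitzOnWith_comp hK hu.1 fun t ht =>
    mem_closedBall_zero_iff.2 (hC t ht), ?_⟩
  filter_upwards [hu.2] with t hut using (hG (u t)).comp t hut

theorem rpow_const {α : ℝ} (hsr : s ≤ r) (hα : 1 ≤ α) (hu : ACOn u u' s r) :
    ACOn (fun t => u t ^ α) (fun t => α * u t ^ (α - 1) * u' t) s r :=
  hu.comp hsr (fun _ => Real.hasDerivAt_rpow_const (p := α) (.inr hα))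
    (continuous_const.mul (Real.continuous_rpow_const (sub_nonneg.2 hα)))

theorem congr_deriv_ae (hu : ACOn u u' s r) (h : u' =ᵐ[volume.restrict (Ioc s r)] w') :
    ACOn u w' s r := by
  refine ⟨(integrableOn_Icc_iff_integrableOn_Ioc (by finiteness)).2 <|
    ((integrableOn_Icc_iff_integrableOn_Ioc (by finiteness)).1 hu.1).congr_fun_ae h, fun t ht => ?_⟩
  rw [hu.2 t ht, intervalIntegral.integral_congr_ae_restrict]
  rw [uIoc_of_le ht.1]
  exact ae_restrict_of_ae_restrict_of_subset (Ioc_subset_Ioc_right ht.2) h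

theorem sub_eq_setIntegral (hsr : s ≤ r) (hu : ACOn u u' s r) :
    u r - u s = ∫ t in Ioc s r, u' t := by
  rw [hu.2 r (right_mem_Icc.2 hsr), intervalIntegral.integral_of_le hsr, add_sub_cancel_left]

theorem enorm_le_lintegral_enorm (hu : ACOn u u' s r) (hus : u s = 0) {t : ℝ}
    (ht : t ∈ Icc s r) : ‖u t‖ₑ ≤ ∫⁻ σ in Ioc s t, ‖u' σ‖ₑ := by
  rw [hu.2 t ht, hus, zero_add, intervalIntegral.integral_of_le ht.1]
  exact enorm_integral_le_lintegral_enorm _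

end ACOn

/-! ### The function `Φ_p` -/

section PhiP

variable {p p' : ℝ}

theorem PhiP_eq (p x : ℝ) : PhiP p x = |x| ^ (p - 2) * x := by
  unfold PhiP
  split_ifs with hx <;> simp [hx]

theorem hasDerivAt_abs_rpow_PhiP (hp : 1 < p) (x : ℝ) :
    HasDerivAt (fun y => |y| ^ p) (p * PhiP p x) x := by
  simpa only [PhiP_eq, mul_assoc] using hasDerivAt_abs_rpow x hp

theorem continuous_PhiP (hp : 1 < p) : Continuous (PhiP p) := by
  have hcont : Continuous (deriv fun x : ℝ => |x| ^ p) :=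
    (contDiff_norm_rpow (E := ℝ) hp).continuous_deriv le_rfl
  rw [funext fun x => (hasDerivAt_abs_rpow_PhiP hp x).deriv] at hcont
  simpa only [smul_eq_mul] using
    (continuous_const_smul_iff₀ (zero_lt_one.trans hp).ne').1 hcont

theorem PhiP_mul_self (hp : p ≠ 0) (x : ℝ) : PhiP p x * x = |x| ^ p := by
  rcases eq_or_ne x 0 with rfl | hx
  · simp [hp]
  · rw [PhiP_eq, mul_assoc, ← sq, ← sq_abs, ← Real.rpow_two, ← Real.rpow_add (abs_pos.2 hx),
      sub_add_cancel]

theorem abs_PhiP (hp : p ≠ 1) (x : ℝ) : |PhiP p x| = |x| ^ (p - 1) := by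
  rcases eq_or_ne x 0 with rfl | hx
  · simp [PhiP_eq, sub_ne_zero.2 hp]
  · rw [PhiP_eq, abs_mul, abs_of_nonneg (by positivity), ← Real.rpow_add_one (abs_ne_zero.2 hx)]
    ring_nf

theorem abs_PhiP_rpow_conj (h : p.HolderConjugate p') (x : ℝ) : |PhiP p x| ^ p' = |x| ^ p := by
  rw [abs_PhiP h.lt.ne', ← Real.rpow_mul (abs_nonneg x), h.sub_one_mul_conj]

theorem PhiP_conj_PhiP (h : p.HolderConjugate p') (x : ℝ) : PhiP p' (PhiP p x) = x := by
  rcases eq_or_ne x 0 with rfl | hx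
  · simp [PhiP_eq]
  · have hexp : (p - 1) * (p' - 2) + (p - 2) = 0 := by linear_combination h.sub_one_mul_conj
    rw [PhiP_eq p', abs_PhiP h.lt.ne', PhiP_eq, ← Real.rpow_mul (abs_nonneg x), ← mul_assoc,
      ← Real.rpow_add (abs_pos.2 hx), hexp, Real.rpow_zero, one_mul]

theorem continuousOn_of_PhiP_comp (hp : 1 < p) {f : ℝ → ℝ} {S : Set ℝ}
    (hf : ContinuousOn (fun t => PhiP p (f t)) S) : ContinuousOn f S := by
  have hconj := Real.HolderConjugate.conjExponent hp
  simpa only [Function.comp_def, PhiP_conj_PhiP hconj] using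
    (continuous_PhiP hconj.symm.lt).comp_continuousOn hf

theorem ACOn.abs_rpow_of_PhiP (h : p.HolderConjugate p') {f v' : ℝ → ℝ} {s r : ℝ} (hsr : s ≤ r)
    (hf : ACOn (fun t => PhiP p (f t)) v' s r) :
    ACOn (fun t => |f t| ^ p) (fun t => p' * f t * v' t) s r := by
  simpa only [abs_PhiP_rpow_conj h, PhiP_conj_PhiP h] using
    ACOn.comp hsr (hasDerivAt_abs_rpow_PhiP h.symm.lt)
      (continuous_const.mul (continuous_PhiP h.symm.lt)) hf

end PhiP

/-! ### The Beesack–Das inequality -/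

theorem lintegral_rpow_le_lintegral_mul_rpow {α : Type*} [MeasurableSpace α] {μ : Measure α}
    {p : ℝ} (hp : 1 < p) {w f : α → ℝ≥0∞} (hw : AEMeasurable w μ) (hf : AEMeasurable f μ)
    (hw0 : ∀ᵐ x ∂μ, w x ≠ 0) (hwtop : ∀ᵐ x ∂μ, w x ≠ ⊤) :
    (∫⁻ x, f x ∂μ) ^ p ≤
      (∫⁻ x, w x * f x ^ p ∂μ) * (∫⁻ x, w x ^ (-(1 / (p - 1))) ∂μ) ^ (p - 1) := by
  have hp0 : 0 < p := zero_lt_one.trans hp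
  have hp1 : 0 < p - 1 := sub_pos.2 hp
  have hsplit : ∀ᵐ x ∂μ,
      f x = (w x * f x ^ p) ^ (1 / p) * (w x ^ (-(1 / (p - 1)))) ^ ((p - 1) / p) := by
    filter_upwards [hw0, hwtop] with x h0 htop
    have hexp : 1 / p + -(1 / (p - 1)) * ((p - 1) / p) = 0 := by field_simp; ring
    rw [ENNReal.mul_rpow_of_nonneg _ _ (by positivity), mul_right_comm, ← ENNReal.rpow_mul (w x),
      ← ENNReal.rpow_add _ _ h0 htop, hexp, ENNReal.rpow_zero, one_mul, ← ENNReal.rpow_mul,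
      mul_one_div_cancel hp0.ne', ENNReal.rpow_one]
  calc (∫⁻ x, f x ∂μ) ^ p
      ≤ ((∫⁻ x, w x * f x ^ p ∂μ) ^ (1 / p) *
          (∫⁻ x, w x ^ (-(1 / (p - 1))) ∂μ) ^ ((p - 1) / p)) ^ p := by
        rw [lintegral_congr_ae hsplit]
        gcongr
        exact ENNReal.lintegral_mul_norm_pow_le (hw.mul (hf.pow_const p)) (hw.pow_const _)
          (by positivity) (by positivity) (by field_simp; ring)
    _ = _ := by
        rw [ENNReal.mul_rpow_of_nonneg _ _ hp0.le, ← ENNReal.rpow_mul, ← ENNReal.rpow_mul,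
          one_div_mul_cancel hp0.ne', ENNReal.rpow_one, div_mul_cancel₀ _ hp0.ne']

theorem measurable_setLIntegral_Ioc (g : ℝ → ℝ≥0∞) (s : ℝ) :
    Measurable fun t => ∫⁻ σ in Ioc s t, g σ :=
  Monotone.measurable fun _ _ hxy => lintegral_mono_set (Ioc_subset_Ioc_right hxy)

theorem acOn_toReal_setLIntegral {g : ℝ → ℝ≥0∞} {s r : ℝ}
    (hg : AEMeasurable g (volume.restrict (Ioc s r))) (hfin : ∫⁻ t in Ioc s r, g t ≠ ⊤) :
    ACOn (fun t => (∫⁻ σ in Ioc s t, g σ).toReal) (fun t => (g t).toReal) s r := by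
  refine ⟨(integrableOn_Icc_iff_integrableOn_Ioc (by finiteness)).2
    (integrable_toReal_of_lintegral_ne_top hg hfin), fun t ht => ?_⟩
  have hsub : Ioc s t ⊆ Ioc s r := Ioc_subset_Ioc_right ht.2
  have hfin' : ∫⁻ σ in Ioc s t, g σ ≠ ⊤ := ne_top_of_le_ne_top hfin (lintegral_mono_set hsub)
  rw [intervalIntegral.integral_of_le ht.1,
    integral_toReal (hg.mono_set hsub) (ae_lt_top' (hg.mono_set hsub) hfin')]
  simp

theorem setLIntegral_primitive_rpow_mul {g : ℝ → ℝ≥0∞} {s r α : ℝ} (hsr : s ≤ r) (hα : 0 < α)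
    (hg : AEMeasurable g (volume.restrict (Ioc s r))) (hfin : ∫⁻ t in Ioc s r, g t ≠ ⊤) :
    ∫⁻ t in Ioc s r, (∫⁻ σ in Ioc s t, g σ) ^ α * g t =
      ENNReal.ofReal (α + 1)⁻¹ * (∫⁻ t in Ioc s r, g t) ^ (α + 1) := by
  set G : ℝ → ℝ≥0∞ := fun t => ∫⁻ σ in Ioc s t, g σ
  have hG {t : ℝ} (ht : t ≤ r) : ENNReal.ofReal (G t).toReal = G t :=
    ENNReal.ofReal_toReal (ne_top_of_le_ne_top hfin (lintegral_mono_set (Ioc_subset_Ioc_right ht)))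
  have hpow := ((acOn_toReal_setLIntegral hg hfin).rpow_const hsr
    (le_add_of_nonneg_left hα.le)).const_mul hsr (α + 1)⁻¹
  simp only [add_sub_cancel_right, mul_assoc,
    inv_mul_cancel_left₀ (show α + 1 ≠ 0 by positivity)] at hpow
  have hFTC := hpow.sub_eq_setIntegral hsr
  simp only [Ioc_self, Measure.restrict_empty, lintegral_zero_measure, ENNReal.toReal_zero,
    Real.zero_rpow (show α + 1 ≠ 0 by positivity), mul_zero, sub_zero] at hFTC
  calc ∫⁻ t in Ioc s r, G t ^ α * g t
      = ∫⁻ t in Ioc s r, ENNReal.ofReal ((G t).toReal ^ α * (g t).toReal) := by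
        refine lintegral_congr_ae ?_
        filter_upwards [ae_lt_top' hg hfin, ae_restrict_mem measurableSet_Ioc] with t hgt ht
        rw [ENNReal.ofReal_mul (by positivity), ← ENNReal.ofReal_rpow_of_nonneg (by positivity)
          hα.le, hG ht.2, ENNReal.ofReal_toReal hgt.ne]
    _ = ENNReal.ofReal ((α + 1)⁻¹ * (G r).toReal ^ (α + 1)) := by
        rw [hFTC, ofReal_integral_eq_lintegral_ofReal (hpow.1.mono_set Ioc_subset_Icc_self)
          (.of_forall fun t => by positivity)]
    _ = ENNReal.ofReal (α + 1)⁻¹ * G r ^ (α + 1) := by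
        rw [ENNReal.ofReal_mul (by positivity), ← ENNReal.ofReal_rpow_of_nonneg (by positivity)
          (by positivity), hG le_rfl]

-- The right-hand side is the product to which Hölder's inequality with exponents `p/l` and
-- `p/(p-l)` is applied in the Beesack–Das inequality: the first factor is the integrand of `BDK`.
theorem mul_rpow_le_of_rpow_le_mul {p l : ℝ} (hl : 0 < l) (hlp : l < p) {Q U V W Y f : ℝ≥0∞}
    (hW0 : W ≠ 0) (hWtop : W ≠ ⊤) (hU : U ^ p ≤ Y * V ^ (p - 1)) :
    Q * (U ^ l * f ^ (p - l)) ≤ (Q ^ (p / l) * W ^ (-((p - l) / l)) * V ^ (p - 1)) ^ (l / p) *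
      (Y ^ (l / (p - l)) * (W * f ^ p)) ^ ((p - l) / p) := by
  have hp : 0 < p := hl.trans hlp
  have hpl : 0 < p - l := sub_pos.2 hlp
  have hUl : U ^ l ≤ Y ^ (l / p) * (V ^ (p - 1)) ^ (l / p) := by
    rw [← ENNReal.mul_rpow_of_nonneg _ _ (by positivity)]
    calc U ^ l = (U ^ p) ^ (l / p) := by rw [← ENNReal.rpow_mul, mul_div_cancel₀ _ hp.ne']
      _ ≤ _ := by gcongr
  have hWW : W ^ (-((p - l) / l) * (l / p)) * W ^ ((p - l) / p) = 1 := by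
    rw [← ENNReal.rpow_add _ _ hW0 hWtop, show -((p - l) / l) * (l / p) + (p - l) / p = 0 by
      field_simp; ring, ENNReal.rpow_zero]
  calc Q * (U ^ l * f ^ (p - l))
      ≤ Q * (Y ^ (l / p) * (V ^ (p - 1)) ^ (l / p) * f ^ (p - l)) *
          (W ^ (-((p - l) / l) * (l / p)) * W ^ ((p - l) / p)) := by
        rw [hWW, mul_one]
        gcongr
    _ = _ := by
        simp only [ENNReal.mul_rpow_of_nonneg _ _ (show 0 ≤ l / p by positivity),
          ENNReal.mul_rpow_of_nonneg _ _ (show 0 ≤ (p - l) / p by positivity),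
          ← ENNReal.rpow_mul Q, ← ENNReal.rpow_mul W, ← ENNReal.rpow_mul Y, ← ENNReal.rpow_mul f]
        rw [show p / l * (l / p) = 1 by field_simp, show l / (p - l) * ((p - l) / p) = l / p by
          field_simp, show p * ((p - l) / p) = p - l by field_simp, ENNReal.rpow_one]
        ring

theorem setLIntegral_mul_primitive_rpow_le_BDK {p l s r : ℝ} {q v : ℝ → ℝ} {f : ℝ → ℝ≥0∞}
    (hp : 1 < p) (hl : 0 < l) (hlp : l < p) (hsr : s ≤ r)
    (hq : AEMeasurable q (volume.restrict (Ioc s r)))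
    (hv : AEMeasurable v (volume.restrict (Ioc s r)))
    (hv0 : ∀ᵐ t ∂volume.restrict (Ioc s r), 0 < v t)
    (hf : AEMeasurable f (volume.restrict (Ioc s r)))
    (hfin : ∫⁻ t in Ioc s r, ENNReal.ofReal (v t) * f t ^ p ≠ ⊤) :
    ∫⁻ t in Ioc s r, ENNReal.ofReal (q t) * ((∫⁻ σ in Ioc s t, f σ) ^ l * f t ^ (p - l)) ≤
      BDK p l q v s (Ioc s r) * ∫⁻ t in Ioc s r, ENNReal.ofReal (v t) * f t ^ p := by
  have hpl : 0 < p - l := sub_pos.2 hlp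
  have hp0 : 0 < p := hl.trans hlp
  set g : ℝ → ℝ≥0∞ := fun t => ENNReal.ofReal (v t) * f t ^ p
  set V : ℝ → ℝ≥0∞ := fun t => ∫⁻ σ in Ioc s t, ENNReal.ofReal (v σ) ^ (-(1 / (p - 1)))
  set Y : ℝ → ℝ≥0∞ := fun t => ∫⁻ σ in Ioc s t, g σ
  set B : ℝ → ℝ≥0∞ := fun t =>
    ENNReal.ofReal (q t) ^ (p / l) * ENNReal.ofReal (v t) ^ (-((p - l) / l)) * V t ^ (p - 1)
  have hg : AEMeasurable g (volume.restrict (Ioc s r)) := hv.ennreal_ofReal.mul (hf.pow_const p)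
  have hB : AEMeasurable B (volume.restrict (Ioc s r)) :=
    ((hq.ennreal_ofReal.pow_const _).mul (hv.ennreal_ofReal.pow_const _)).mul
      ((measurable_setLIntegral_Ioc _ s).pow_const _).aemeasurable
  have hpointwise : ∀ᵐ t ∂volume.restrict (Ioc s r),
      ENNReal.ofReal (q t) * ((∫⁻ σ in Ioc s t, f σ) ^ l * f t ^ (p - l)) ≤
        B t ^ (l / p) * (Y t ^ (l / (p - l)) * g t) ^ ((p - l) / p) := by
    filter_upwards [hv0, ae_restrict_mem measurableSet_Ioc] with t hvt ht
    have hsub : Ioc s t ⊆ Ioc s r := Ioc_subset_Ioc_right ht.2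
    refine mul_rpow_le_of_rpow_le_mul hl hlp (ENNReal.ofReal_pos.2 hvt).ne' ENNReal.ofReal_ne_top
      (lintegral_rpow_le_lintegral_mul_rpow hp (hv.mono_set hsub).ennreal_ofReal
        (hf.mono_set hsub) ?_ (.of_forall fun _ => ENNReal.ofReal_ne_top))
    filter_upwards [ae_restrict_of_ae_restrict_of_subset hsub hv0] with σ hσ
      using (ENNReal.ofReal_pos.2 hσ).ne'
  calc _ ≤ (∫⁻ t in Ioc s r, B t) ^ (l / p) *
        (∫⁻ t in Ioc s r, Y t ^ (l / (p - l)) * g t) ^ ((p - l) / p) :=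
        (lintegral_mono_ae hpointwise).trans <| ENNReal.lintegral_mul_norm_pow_le hB
          (((measurable_setLIntegral_Ioc g s).pow_const _).aemeasurable.mul hg)
          (by positivity) (by positivity) (by field_simp; ring)
    -- As `Y' = g`, the second integrand is `((p - l) / p) * (Y ^ (p / (p - l)))'`.
    _ = BDK p l q v s (Ioc s r) * ∫⁻ t in Ioc s r, g t := by
        have hexp : l / (p - l) + 1 = p / (p - l) := by field_simp; ring
        rw [setLIntegral_primitive_rpow_mul hsr (by positivity) hg hfin, hexp, inv_div,
          ENNReal.mul_rpow_of_nonneg _ _ (by positivity),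
          ENNReal.ofReal_rpow_of_pos (by positivity), ← ENNReal.rpow_mul,
          div_mul_div_cancel₀ hpl.ne', div_self hp0.ne', ENNReal.rpow_one, BDK]
        ring

theorem integral_le_toReal_lintegral_ofReal {α : Type*} [MeasurableSpace α] {μ : Measure α}
    {f : α → ℝ} : ∫ x, f x ∂μ ≤ (∫⁻ x, ENNReal.ofReal (f x) ∂μ).toReal := by
  by_cases hf : Integrable f μ
  · rw [integral_eq_lintegral_pos_part_sub_lintegral_neg_part hf]
    exact sub_le_self _ ENNReal.toReal_nonneg
  · rw [integral_undef hf]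
    exact ENNReal.toReal_nonneg

theorem ofReal_abs_rpow (x : ℝ) {α : ℝ} (hα : 0 ≤ α) : ENNReal.ofReal (|x| ^ α) = ‖x‖ₑ ^ α := by
  rw [← ENNReal.ofReal_rpow_of_nonneg (abs_nonneg x) hα, Real.enorm_eq_ofReal_abs]

theorem ACOn.setIntegral_mul_rpow_le_BDK {p l s r : ℝ} {q v u u' : ℝ → ℝ}
    (hp : 1 < p) (hl : 0 < l) (hlp : l < p) (hsr : s ≤ r) (hu : ACOn u u' s r) (hus : u s = 0)
    (hq : AEMeasurable q (volume.restrict (Ioc s r)))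
    (hv : AEMeasurable v (volume.restrict (Ioc s r)))
    (hv0 : ∀ᵐ t ∂volume.restrict (Ioc s r), 0 < v t)
    (hvu : IntegrableOn (fun t => v t * |u' t| ^ p) (Ioc s r))
    (hK : BDK p l q v s (Ioc s r) ≠ ⊤) :
    ∫ t in Ioc s r, q t * (|u t| ^ l * |u' t| ^ (p - l)) ≤
      (BDK p l q v s (Ioc s r)).toReal * ∫ t in Ioc s r, v t * |u' t| ^ p := by
  have hp0 : 0 < p := hl.trans hlp
  have hvu0 : 0 ≤ᵐ[volume.restrict (Ioc s r)] fun t => v t * |u' t| ^ p := by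
    filter_upwards [hv0] with t ht using mul_nonneg ht.le (by positivity)
  have hright : ∫⁻ t in Ioc s r, ENNReal.ofReal (v t) * ‖u' t‖ₑ ^ p =
      ENNReal.ofReal (∫ t in Ioc s r, v t * |u' t| ^ p) := by
    rw [ofReal_integral_eq_lintegral_ofReal hvu hvu0]
    refine lintegral_congr fun t => ?_
    rw [ENNReal.ofReal_mul' (by positivity), ofReal_abs_rpow _ hp0.le]
  have hleft : ∫⁻ t in Ioc s r, ENNReal.ofReal (q t * (|u t| ^ l * |u' t| ^ (p - l))) ≤
      ∫⁻ t in Ioc s r, ENNReal.ofReal (q t) *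
        ((∫⁻ σ in Ioc s t, ‖u' σ‖ₑ) ^ l * ‖u' t‖ₑ ^ (p - l)) := by
    refine setLIntegral_mono' measurableSet_Ioc fun t ht => ?_
    rw [ENNReal.ofReal_mul' (by positivity), ENNReal.ofReal_mul (by positivity),
      ofReal_abs_rpow _ hl.le, ofReal_abs_rpow _ (sub_nonneg.2 hlp.le)]
    gcongr
    exact hu.enorm_le_lintegral_enorm hus (Ioc_subset_Icc_self ht)
  have hBDK := setLIntegral_mul_primitive_rpow_le_BDK hp hl hlp hsr hq hv hv0
    (hu.1.mono_set Ioc_subset_Icc_self).aestronglyMeasurable.enorm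
    (hright ▸ ENNReal.ofReal_ne_top)
  rw [hright] at hBDK
  refine integral_le_toReal_lintegral_ofReal.trans <|
    (ENNReal.toReal_mono (by finiteness) (hleft.trans hBDK)).trans_eq ?_
  rw [ENNReal.toReal_mul, ENNReal.toReal_ofReal (integral_nonneg_of_ae hvu0)]

theorem BDK_mono {p l s s' : ℝ} {S S' : Set ℝ} {q v : ℝ → ℝ} (hp : 1 < p) (hl : 0 < l)
    (hs : s ≤ s') (hS : S' ⊆ S) : BDK p l q v s' S' ≤ BDK p l q v s S := by
  have : 0 < p := zero_lt_one.trans hp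
  have : 0 < p - 1 := sub_pos.2 hp
  unfold BDK
  gcongr

theorem tendsto_BDK_nhdsGT {p l s r : ℝ} {q v : ℝ → ℝ} (hl : 0 < l) (hlp : l < p)
    (hsr : s < r) (hK : BDK p l q v s (Ioc s r) ≠ ⊤) :
    Tendsto (fun x => BDK p l q v s (Ioc s x)) (𝓝[>] s) (𝓝 0) := by
  have hp : 0 < p := hl.trans hlp
  have : 0 < p - l := sub_pos.2 hlp
  set B : ℝ → ℝ≥0∞ := fun t => ENNReal.ofReal (q t) ^ (p / l) *
    ENNReal.ofReal (v t) ^ (-((p - l) / l)) *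
      (∫⁻ σ in Ioc s t, ENNReal.ofReal (v σ) ^ (-(1 / (p - 1)))) ^ (p - 1)
  have hB : ∫⁻ t in Ioc s r, B t ≠ ⊤ := by
    contrapose! hK
    have hconst : 0 < ((p - l) / p) ^ ((p - l) / p) := by positivity
    rw [BDK, hK, ENNReal.top_rpow_of_pos (by positivity),
      ENNReal.mul_top (ENNReal.ofReal_pos.2 hconst).ne']
  have hvol : Tendsto (fun x => volume.restrict (Ioc s r) (Ioc s x)) (𝓝[>] s) (𝓝 0) := by
    have hlen : Tendsto (fun x => ENNReal.ofReal (x - s)) (𝓝[>] s) (𝓝 (ENNReal.ofReal (s - s))) :=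
      (ENNReal.continuous_ofReal.comp (continuous_id.sub continuous_const)).continuousWithinAt
    rw [sub_self, ENNReal.ofReal_zero] at hlen
    exact tendsto_of_tendsto_of_tendsto_of_le_of_le tendsto_const_nhds hlen
      (fun _ => zero_le) fun x => (Measure.restrict_apply_le _ _).trans_eq Real.volume_Ioc
  have hint : Tendsto (fun x => ∫⁻ t in Ioc s x, B t) (𝓝[>] s) (𝓝 0) := by
    refine (tendsto_setLIntegral_zero hB hvol).congr' ?_
    filter_upwards [Ioc_mem_nhdsGT hsr] with x hx
    rw [Measure.restrict_restrict_of_subset (Ioc_subset_Ioc_right hx.2)]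
  have hlim := ENNReal.Tendsto.const_mul
    (hint.ennrpow_const (l / p)) (.inr ENNReal.ofReal_ne_top)
    (a := ENNReal.ofReal (((p - l) / p) ^ ((p - l) / p)))
  rwa [ENNReal.zero_rpow_of_pos (by positivity), mul_zero] at hlim

/-! ### Energy balance and triviality -/

/-- The energy `(1 - 1/p) a |u'|^p + ∫₀ᵘ φ` of a solution of the nondivergent equation: the
kinetic term weighted by `a` plus the potential of the nonlinearity `φ`. -/
noncomputable def energy (p : ℝ) (φ a u u' : ℝ → ℝ) (t : ℝ) : ℝ :=
  (1 - 1 / p) * (a t * |u' t| ^ p) + ∫ x in 0..u t, φ x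

theorem acOn_energy {p n s r : ℝ} {φ a a' u u' v' g : ℝ → ℝ} (hp : 1 < p) (hsr : s ≤ r)
    (hφ : Continuous φ) (ha : ACOn a a' s r) (hu : ACOn u u' s r)
    (hv : ACOn (fun t => PhiP p (u' t)) v' s r)
    (hODE : ∀ᵐ t ∂volume.restrict (Ioc s r),
      a t * v' t + (n - 1) * (a t / t) * PhiP p (u' t) - g t + φ (u t) = 0) :
    ACOn (energy p φ a u u') (fun t => g t * u' t - deltaA n p a a' t * |u' t| ^ p) s r := by
  have hconj := Real.HolderConjugate.conjExponent hp
  have hkinetic := (ha.mul hsr (hv.abs_rpow_of_PhiP hconj hsr)).const_mul hsr (1 - 1 / p)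
  have hpotential := hu.comp (G := fun x => ∫ y in 0..x, φ y) hsr
    (fun x => (hφ.integral_hasStrictDerivAt 0 x).hasDerivAt) hφ
  refine (hkinetic.add hsr hpotential).congr_deriv_ae ?_
  filter_upwards [hODE] with t ht
  have hcancel : (1 - 1 / p) * p.conjExponent = 1 := by
    rw [one_div, hconj.one_sub_inv, inv_mul_cancel₀ hconj.symm.ne_zero]
  rw [← PhiP_mul_self hconj.ne_zero, deltaA]
  linear_combination u' t * ht + a t * u' t * v' t * hcancel

theorem integral_nonneg_of_ae_nonneg_mul_self {φ : ℝ → ℝ} (hφ : ∀ᵐ x, 0 ≤ x * φ x) (t : ℝ) :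
    0 ≤ ∫ x in 0..t, φ x := by
  rcases le_total 0 t with ht | ht
  · rw [intervalIntegral.integral_of_le ht]
    refine setIntegral_nonneg_of_ae_restrict ?_
    filter_upwards [ae_restrict_of_ae hφ, ae_restrict_mem measurableSet_Ioc] with x hx hx0
      using nonneg_of_mul_nonneg_right hx hx0.1
  · rw [intervalIntegral.integral_symm, intervalIntegral.integral_of_le ht,
      ← restrict_Ioo_eq_restrict_Ioc, ← integral_neg]
    refine setIntegral_nonneg_of_ae_restrict ?_
    filter_upwards [ae_restrict_of_ae hφ, ae_restrict_mem measurableSet_Ioo] with x hx hx0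
      using neg_nonneg.2 (nonpos_of_mul_nonneg_right hx hx0.2)

theorem nonneg_on_Icc_of_ae_nonneg {f : ℝ → ℝ} {s r : ℝ} (hsr : s ≠ r)
    (hf : ContinuousOn f (Icc s r)) (hf0 : ∀ᵐ t ∂volume.restrict (Ioc s r), 0 ≤ f t) :
    ∀ t ∈ Icc s r, 0 ≤ f t := by
  rw [restrict_Ioc_eq_restrict_Icc] at hf0
  have habs : EqOn f (fun t => |f t|) (Icc s r) :=
    Measure.eqOn_Icc_of_ae_eq volume hsr (hf0.mono fun t ht => (abs_of_nonneg ht).symm) hf hf.abs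
  exact fun t ht => habs ht ▸ abs_nonneg (f t)

section Dissipation

variable {p l θ s r : ℝ} {q δ u u' g : ℝ → ℝ}

theorem integrableOn_mul_abs_rpow {v f : ℝ → ℝ} (hp : 0 ≤ p) (hv : IntegrableOn v (Ioc s r))
    (hf : ContinuousOn f (Icc s r)) : IntegrableOn (fun t => v t * |f t| ^ p) (Ioc s r) := by
  rw [← integrableOn_Icc_iff_integrableOn_Ioc (by finiteness)] at hv ⊢
  exact hv.mul_continuousOn (hf.abs.rpow_const fun _ _ => .inr hp) isCompact_Icc

theorem energy_add_dissipation_le {E : ℝ → ℝ} (hp : 1 < p) (hl : 0 < l) (hlp : l < p)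
    (hθ : 0 ≤ θ) (hsr : s ≤ r)
    (hE : ACOn E (fun t => g t * u' t - δ t * |u' t| ^ p) s r)
    (hu : ACOn u u' s r) (hu' : ContinuousOn u' (Icc s r)) (hus : u s = 0)
    (hq : IntegrableOn q (Ioc s r)) (hδ : IntegrableOn δ (Ioc s r))
    (hδ0 : ∀ᵐ t ∂volume.restrict (Ioc s r), 0 < δ t)
    (hgrowth : ∀ᵐ t ∂volume.restrict (Ioc s r),
      g t * u' t ≤ θ * q t * |u t| ^ l * |u' t| ^ (p - l) + (1 - θ) * δ t * |u' t| ^ p)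
    (hK : BDK p l q δ s (Ioc s r) ≠ ⊤) :
    E r + θ * (1 - (BDK p l q δ s (Ioc s r)).toReal) * ∫ t in Ioc s r, δ t * |u' t| ^ p ≤ E s := by
  have hdiss : IntegrableOn (fun t => δ t * |u' t| ^ p) (Ioc s r) :=
    integrableOn_mul_abs_rpow (hl.trans hlp).le hδ hu'
  have hforce : IntegrableOn (fun t => q t * (|u t| ^ l * |u' t| ^ (p - l))) (Ioc s r) := by
    simpa only [mul_assoc] using integrableOn_mul_abs_rpow (sub_nonneg.2 hlp.le)
      (integrableOn_mul_abs_rpow hl.le hq hu.continuousOn) hu'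
  have hderiv : ∫ t in Ioc s r, (g t * u' t - δ t * |u' t| ^ p) ≤
      ∫ t in Ioc s r, (θ * (q t * (|u t| ^ l * |u' t| ^ (p - l))) - θ * (δ t * |u' t| ^ p)) := by
    refine integral_mono_ae (hE.1.mono_set Ioc_subset_Icc_self)
      ((hforce.const_mul θ).sub (hdiss.const_mul θ)) ?_
    filter_upwards [hgrowth] with t ht
    linarith
  rw [← hE.sub_eq_setIntegral hsr, integral_sub (hforce.const_mul θ) (hdiss.const_mul θ),
    integral_const_mul, integral_const_mul] at hderiv
  have hBDK := mul_le_mul_of_nonneg_left (hu.setIntegral_mul_rpow_le_BDK hp hl hlp hsr hus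
    hq.aemeasurable hδ.aemeasurable hδ0 hdiss hK) hθ
  linarith

theorem ACOn.eq_of_setIntegral_mul_abs_rpow_nonpos (hp : 0 < p) (hsr : s ≤ r)
    (hu : ACOn u u' s r) (hδ0 : ∀ᵐ t ∂volume.restrict (Ioc s r), 0 < δ t)
    (hδu : IntegrableOn (fun t => δ t * |u' t| ^ p) (Ioc s r))
    (hD : ∫ t in Ioc s r, δ t * |u' t| ^ p ≤ 0) : u r = u s := by
  have hnonneg : 0 ≤ᵐ[volume.restrict (Ioc s r)] fun t => δ t * |u' t| ^ p := by
    filter_upwards [hδ0] with t ht using mul_nonneg ht.le (by positivity)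
  have hzero := (integral_eq_zero_iff_of_nonneg_ae hnonneg hδu).1
    (hD.antisymm (integral_nonneg_of_ae hnonneg))
  rw [← sub_eq_zero, hu.sub_eq_setIntegral hsr]
  refine integral_eq_zero_of_ae ?_
  filter_upwards [hzero, hδ0] with t ht hδt
  simpa [hδt.ne', Real.rpow_eq_zero_iff_of_nonneg, hp.ne'] using ht

theorem eq_zero_of_BDK_lt_one {φ a : ℝ → ℝ} (hp : 1 < p) (hl : 0 < l) (hlp : l < p)
    (hθ : 0 < θ) (hsr : s ≤ r) (hφ : ∀ x, 0 ≤ ∫ y in 0..x, φ y) (har : 0 ≤ a r)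
    (hE : ACOn (energy p φ a u u') (fun t => g t * u' t - δ t * |u' t| ^ p) s r)
    (hu : ACOn u u' s r) (hu' : ContinuousOn u' (Icc s r))
    (hq : IntegrableOn q (Ioc s r)) (hδ : IntegrableOn δ (Ioc s r))
    (hδ0 : ∀ᵐ t ∂volume.restrict (Ioc s r), 0 < δ t)
    (hgrowth : ∀ᵐ t ∂volume.restrict (Ioc s r),
      g t * u' t ≤ θ * q t * |u t| ^ l * |u' t| ^ (p - l) + (1 - θ) * δ t * |u' t| ^ p)
    (hK : BDK p l q δ s (Ioc s r) < 1) (hus : u s = 0) (hkin : a s * |u' s| ^ p = 0) :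
    u r = 0 ∧ a r * |u' r| ^ p = 0 := by
  set D : ℝ := ∫ t in Ioc s r, δ t * |u' t| ^ p
  have hp0 : 0 < p := hl.trans hlp
  have hD : 0 ≤ D := setIntegral_nonneg_of_ae_restrict <| by
    filter_upwards [hδ0] with t ht using mul_nonneg ht.le (by positivity)
  have hc : 0 < θ * (1 - (BDK p l q δ s (Ioc s r)).toReal) :=
    mul_pos hθ (sub_pos.2 (by simpa using ENNReal.toReal_strict_mono ENNReal.one_ne_top hK))
  have hbalance := energy_add_dissipation_le hp hl hlp hθ.le hsr hE hu hu' hus hq hδ hδ0 hgrowth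
    hK.ne_top
  have hp1 : 0 < 1 - 1 / p := sub_pos.2 ((div_lt_one hp0).2 hp)
  have hkin0 : 0 ≤ a r * |u' r| ^ p := by positivity
  simp only [energy, hus, hkin, intervalIntegral.integral_same, mul_zero, add_zero] at hbalance
  have hD0 : D ≤ 0 := by
    refine nonpos_of_mul_nonpos_right ?_ hc
    linarith [hφ (u r), mul_nonneg hp1.le hkin0]
  refine ⟨(hu.eq_of_setIntegral_mul_abs_rpow_nonpos hp0 hsr hδ0
    (integrableOn_mul_abs_rpow hp0.le hδ hu') hD0).trans hus, hkin0.antisymm' ?_⟩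
  refine nonpos_of_mul_nonpos_right ?_ hp1
  linarith [hφ (u r), mul_nonneg hc.le hD]

end Dissipation

theorem triviality_nondivergent_general {p l n θ s r : ℝ} {φ a a' q g u u' v' : ℝ → ℝ}
    (hp : 1 < p) (hl : 0 < l) (hlp : l < p) (hθ : 0 < θ) (hsr : s < r)
    (hφ : Continuous φ) (hφ0 : ∀ x, 0 ≤ ∫ y in 0..x, φ y)
    (ha : ACOn a a' s r) (ha0 : ∀ᵐ t ∂volume.restrict (Ioc s r), 0 ≤ a t)
    (hδ : IntegrableOn (deltaA n p a a') (Ioc s r))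
    (hδ0 : ∀ᵐ t ∂volume.restrict (Ioc s r), 0 < deltaA n p a a' t)
    (hq : IntegrableOn q (Ioc s r))
    (hgrowth : ∀ᵐ t ∂volume.restrict (Ioc s r), g t * u' t ≤
      θ * q t * |u t| ^ l * |u' t| ^ (p - l) + (1 - θ) * deltaA n p a a' t * |u' t| ^ p)
    (hK : BDK p l q (deltaA n p a a') s (Ioc s r) ≠ ⊤)
    (hu : ACOn u u' s r) (hv : ACOn (fun t => PhiP p (u' t)) v' s r)
    (hODE : ∀ᵐ t ∂volume.restrict (Ioc s r),
      a t * v' t + (n - 1) * (a t / t) * PhiP p (u' t) - g t + φ (u t) = 0)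
    (hus : u s = 0) (hdeg : a s = 0 ∨ u' s = 0) :
    ∀ t ∈ Icc s r, u t = 0 := by
  have hp0 : p ≠ 0 := (zero_lt_one.trans hp).ne'
  have hu' : ContinuousOn u' (Icc s r) := continuousOn_of_PhiP_comp hp hv.continuousOn
  have hE := acOn_energy hp hsr.le hφ ha hu hv hODE
  have hkin : ContinuousOn (fun t => a t * |u' t| ^ p) (Icc s r) :=
    ha.continuousOn.mul (hu'.abs.rpow_const fun _ _ => .inr (zero_le_one.trans hp.le))
  set Z : Set ℝ := {t | u t = 0 ∧ a t * |u' t| ^ p = 0}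
  have hZ : IsClosed (Z ∩ Icc s r) := by
    simpa only [preimage, mem_singleton_iff, Prod.mk_eq_zero, inter_comm] using
      (hu.continuousOn.prodMk hkin).preimage_isClosed_of_isClosed isClosed_Icc
        (isClosed_singleton (x := (0 : ℝ × ℝ)))
  have hsZ : s ∈ Z := ⟨hus, by rcases hdeg with h | h <;> simp [h, hp0]⟩
  refine fun t ht => (hZ.Icc_subset_of_forall_exists_gt hsZ ?_ ht).1
  rintro T ⟨⟨huT, hkinT⟩, hsT, hTr⟩ y hTy
  have hKT : BDK p l q (deltaA n p a a') T (Ioc T r) ≠ ⊤ :=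
    ne_top_of_le_ne_top hK (BDK_mono hp hl hsT (Ioc_subset_Ioc_left hsT))
  obtain ⟨x, hKx, hTx, hxy⟩ := (((tendsto_BDK_nhdsGT hl hlp hTr hKT).eventually_lt_const
    zero_lt_one).and (Ioc_mem_nhdsGT (lt_min hTy hTr))).exists
  obtain ⟨hxy, hxr⟩ := le_min_iff.1 hxy
  have hsub : Ioc T x ⊆ Ioc s r := Ioc_subset_Ioc hsT hxr
  exact ⟨x, eq_zero_of_BDK_lt_one hp hl hlp hθ hTx.le hφ0
    (nonneg_on_Icc_of_ae_nonneg hsr.ne ha.continuousOn ha0 x ⟨hsT.trans hTx.le, hxr⟩)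
    (hE.mono hsT hxr) (hu.mono hsT hxr) (hu'.mono (Icc_subset_Icc hsT hxr))
    (hq.mono_set hsub) (hδ.mono_set hsub) (ae_restrict_of_ae_restrict_of_subset hsub hδ0)
    (ae_restrict_of_ae_restrict_of_subset hsub hgrowth) hKx huT hkinT, hTx, hxy⟩

/-- **Triviality (nondivergent form)**, Theorem 2 ii) of the paper. -/
theorem triviality_nondivergent
    (p l n : ℝ) (R : ℝ≥0∞)
    (hp : 1 < p) (hl0 : 0 < l) (hlp : l < p) (hn : 1 ≤ n) (hR : 0 < R)
    (φ : ℝ → ℝ) (hφcont : Continuous φ) (hφodd : ∀ t : ℝ, φ (-t) = -φ t)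
    (hφsign : ∀ᵐ τ ∂(volume : Measure ℝ), 0 < τ * φ τ)
    (a a' : ℝ → ℝ)
    (haAC : ∀ r : ℝ, 0 < r → ENNReal.ofReal r < R → ACOn a a' 0 r)
    (q : ℝ → ℝ) (hqmeas : Measurable q)
    (hapos : ∀ᵐ τ ∂(volume.restrict {τ : ℝ | 0 < τ ∧ ENNReal.ofReal τ < R}), 0 < a τ)
    (hvpos : ∀ᵐ τ ∂(volume.restrict {τ : ℝ | 0 < τ ∧ ENNReal.ofReal τ < R}), 0 < deltaA n p a a' τ)
    (hvint : ∀ r : ℝ, 0 < r → ENNReal.ofReal r < R →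
      IntegrableOn (deltaA n p a a') (Set.Ioc 0 r) ∧
        IntegrableOn (fun τ => deltaA n p a a' τ ^ (-(1 / (p - 1)))) (Set.Ioc 0 r))
    (hqint : ∀ r : ℝ, 0 < r → ENNReal.ofReal r < R → IntegrableOn q (Set.Ioc 0 r))
    (h : ℝ → ℝ → ℝ → ℝ)
    (hhmeas : ∀ lam₀ lam₁ : ℝ, Measurable fun τ => h τ lam₀ lam₁)
    (hhcont : ∀ τ : ℝ, Continuous fun z : ℝ × ℝ => h τ z.1 z.2)
    (θ : ℝ) (hθ0 : 0 < θ) (hθ1 : θ ≤ 1)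
    (hq0 : ∀ᵐ τ ∂(volume.restrict {τ : ℝ | 0 < τ ∧ ENNReal.ofReal τ < R}), 0 ≤ q τ)
    (hgrowth : ∀ᵐ τ ∂(volume.restrict {τ : ℝ | 0 < τ ∧ ENNReal.ofReal τ < R}),
      ∀ lam₀ lam₁ : ℝ, h τ lam₀ lam₁ * lam₁ ≤
        θ * q τ * |lam₀| ^ l * |lam₁| ^ (p - l) + (1 - θ) * deltaA n p a a' τ * |lam₁| ^ p)
    (hK : ∀ r : ℝ, 0 < r → ENNReal.ofReal r < R →
      BDK p l q (deltaA n p a a') 0 (Set.Ioc 0 r) < ⊤)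
    (u u' v' : ℝ → ℝ)
    (huAC : ∀ r : ℝ, 0 < r → ENNReal.ofReal r < R → ACOn u u' 0 r)
    (hvAC : ∀ r : ℝ, 0 < r → ENNReal.ofReal r < R →
      ACOn (fun τ => PhiP p (u' τ)) v' 0 r)
    (hu0 : u 0 = 0)
    (hODE : ∀ᵐ τ ∂(volume.restrict {τ : ℝ | 0 < τ ∧ ENNReal.ofReal τ < R}),
      a τ * v' τ + (n - 1) * (a τ / τ) * PhiP p (u' τ)
        - h τ (u τ) (u' τ) + φ (u τ) = 0)
    (hdeg : a 0 = 0 ∨ u' 0 = 0) :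
    ∀ τ : ℝ, 0 ≤ τ → ENNReal.ofReal τ < R → u τ = 0 := by
  intro τ hτ hτR
  rcases hτ.eq_or_lt with rfl | hτ0
  · exact hu0
  have hle : volume.restrict (Ioc 0 τ) ≤ volume.restrict {t | 0 < t ∧ ENNReal.ofReal t < R} :=
    Measure.restrict_mono_set volume fun _ ht =>
      ⟨ht.1, (ENNReal.ofReal_le_ofReal ht.2).trans_lt hτR⟩
  exact triviality_nondivergent_general (g := fun t => h t (u t) (u' t)) hp hl0 hlp hθ0 hτ0 hφcont
    (integral_nonneg_of_ae_nonneg_mul_self (hφsign.mono fun _ => le_of_lt)) (haAC τ hτ0 hτR)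
    (ae_mono hle (hapos.mono fun _ => le_of_lt)) (hvint τ hτ0 hτR).1 (ae_mono hle hvpos)
    (hqint τ hτ0 hτR) (ae_mono hle (hgrowth.mono fun t ht => ht (u t) (u' t))) (hK τ hτ0 hτR).ne
    (huAC τ hτ0 hτR) (hvAC τ hτ0 hτR) (ae_mono hle hODE) hu0 hdeg τ ⟨hτ, le_rfl⟩
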